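/- Let Λ : ℝ → ℝ satisfy hypotheses (H) and let δ∞ ≥ 0. For every p ∈ ℝ, the constrained supremum H(p) = sup_{δ ≥ −δ∞} Λ(δ)(δ − p) is attained at a unique point δ*(p), given explicitly by δ*(p) = max(δ̃*(p), −δ∞), where δ̃*(p) is the unique unconstrained maximizer of δ ↦ Λ(δ)(δ − p) on ℝ. Moreover, the map p ↦ δ*(p) is continuous and nondecreasing on ℝ. -/

import Mathlib

/-- Hypotheses (H) on an intensity function `Λ`. -/
def HypH (Λ : ℝ → ℝ) : Prop :=
  ContDiff ℝ 2 Λ ∧ StrictAnti Λ ∧ (∀ δ : ℝ, deriv Λ δ < 0) ∧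
    Filter.Tendsto Λ Filter.atTop (nhds 0) ∧
    ∃ c : ℝ, c < 2 ∧ ∀ δ : ℝ, Λ δ * iteratedDeriv 2 Λ δ / (deriv Λ δ) ^ 2 ≤ c

/-!
For `δ < δ'`, a larger `p` makes `Λ(δ')(δ' - p)` gain on `Λ(δ)(δ - p)`, because `Λ` is decreasing.
This strict single crossing property makes the unconstrained maximizer `δ̃*` nondecreasing. If every
`δ` is moreover optimal for some `p`, then comparing `p` with the parameter for which `δ` is optimal
shows that `Λ(δ)(δ - p)` is strictly increasing before `δ̃*(p)` and strictly decreasing after it, so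
that the constrained maximizer is the point of the half-line closest to `δ̃*(p)`; and a monotone
surjection is continuous. Surjectivity comes from the first-order condition
`p = δ + Λ(δ) / Λ'(δ)`, whose right-hand side is strictly increasing since `Λ Λ'' < 2 Λ'²`.
-/

theorem apply_lt_apply_max_of_strictMonoOn_of_strictAntiOn {X G : Type*} [LinearOrder X]
    [Preorder G] {f : X → G} {a m x : X} (hmono : StrictMonoOn f (Set.Iic m))
    (hanti : StrictAntiOn f (Set.Ici m)) (hx : a ≤ x) (hne : x ≠ max m a) :
    f x < f (max m a) := by
  rcases hne.lt_or_gt with hlt | hgt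
  · have hxm : x < m := (lt_max_iff.1 hlt).resolve_right hx.not_gt
    rw [max_eq_left (hx.trans hxm.le)]
    exact hmono hxm.le le_rfl hxm
  · exact hanti (le_max_left m a) ((le_max_left m a).trans hgt.le) hgt

/-- The strict single crossing property of Milgrom and Shannon for a family `F p` of objective
functions: a larger choice that is weakly preferred at `p` is strictly preferred at every larger
parameter. It drives the comparative statics of maximizers. -/
def StrictSingleCrossing {P X G : Type*} [LT P] [LT X] [Preorder G] (F : P → X → G) : Prop :=
  ∀ ⦃p q : P⦄, p < q → ∀ ⦃x y : X⦄, x < y → F p x ≤ F p y → F q x < F q y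

namespace StrictSingleCrossing

variable {P X G : Type*} [LinearOrder P] [LinearOrder X] [LinearOrder G] {F : P → X → G} {s : P → X}

theorem monotone_maximizer (hF : StrictSingleCrossing F) (hmax : ∀ p x, F p x ≤ F p (s p)) :
    Monotone s := by
  refine monotone_iff_forall_lt.2 fun p q hpq => ?_
  by_contra! hlt
  exact (hF hpq hlt (hmax p (s q))).not_ge (hmax q (s p))

theorem strictMonoOn_Iic_maximizer (hF : StrictSingleCrossing F) [DenselyOrdered X]
    (hmax : ∀ p x, F p x ≤ F p (s p)) (hs : Function.Surjective s) (p : P) :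
    StrictMonoOn (F p) (Set.Iic (s p)) := by
  have lt_of_lt_maximizer : ∀ {x y : X}, x < y → y < s p → F p x < F p y := by
    intro x y hxy hy
    obtain ⟨q, rfl⟩ := hs y
    exact hF ((hF.monotone_maximizer hmax).reflect_lt hy) hxy (hmax q x)
  intro x _ y hy hxy
  obtain ⟨z, hxz, hzy⟩ := exists_between hxy
  rcases (Set.mem_Iic.1 hy).lt_or_eq with hlt | rfl
  · exact lt_of_lt_maximizer hxy hlt
  · exact (lt_of_lt_maximizer hxz hzy).trans_le (hmax p z)

theorem strictAntiOn_Ici_maximizer (hF : StrictSingleCrossing F) [DenselyOrdered X]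
    (hmax : ∀ p x, F p x ≤ F p (s p)) (hs : Function.Surjective s) (p : P) :
    StrictAntiOn (F p) (Set.Ici (s p)) := by
  have lt_of_maximizer_lt : ∀ {x y : X}, s p < x → x < y → F p y < F p x := by
    intro x y hx hxy
    obtain ⟨q, rfl⟩ := hs x
    by_contra! hle
    exact (hF ((hF.monotone_maximizer hmax).reflect_lt hx) hxy hle).not_ge (hmax q y)
  intro x hx y _ hxy
  obtain ⟨z, hxz, hzy⟩ := exists_between hxy
  rcases (Set.mem_Ici.1 hx).lt_or_eq with hlt | rfl
  · exact lt_of_maximizer_lt hlt hxy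
  · exact (lt_of_maximizer_lt hxz hzy).trans_le (hmax p z)

theorem apply_lt_apply_max (hF : StrictSingleCrossing F) [DenselyOrdered X]
    (hmax : ∀ p x, F p x ≤ F p (s p)) (hs : Function.Surjective s) (p : P) {a x : X}
    (hx : a ≤ x) (hne : x ≠ max (s p) a) : F p x < F p (max (s p) a) :=
  apply_lt_apply_max_of_strictMonoOn_of_strictAntiOn (hF.strictMonoOn_Iic_maximizer hmax hs p)
    (hF.strictAntiOn_Ici_maximizer hmax hs p) hx hne

end StrictSingleCrossing

theorem strictSingleCrossing_mul_sub {R : Type*} [CommRing R] [LinearOrder R]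
    [IsStrictOrderedRing R] {Λ : R → R} (hΛ : StrictAnti Λ) :
    StrictSingleCrossing fun p δ => Λ δ * (δ - p) := by
  intro p q hpq x y hxy hle
  calc Λ x * (x - q) = Λ x * (x - p) - Λ x * (q - p) := by ring
    _ ≤ Λ y * (y - p) - Λ x * (q - p) := sub_le_sub_right hle _
    _ < Λ y * (y - p) - Λ y * (q - p) :=
      sub_lt_sub_left (mul_lt_mul_of_pos_right (hΛ hxy) (sub_pos.2 hpq)) _
    _ = Λ y * (y - q) := by ring

section FirstOrderCondition

variable {Λ : ℝ → ℝ}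

/-- The parameter `p` for which `δ` is a critical point of `δ ↦ Λ δ * (δ - p)`, i.e. the solution
of `Λ' δ * (δ - p) + Λ δ = 0`; this is the virtual value of auction theory. It inverts the
unconstrained maximizer, and is meaningful only where `deriv Λ δ ≠ 0`. -/
noncomputable def virtualValue (Λ : ℝ → ℝ) (δ : ℝ) : ℝ :=
  δ + Λ δ / deriv Λ δ

theorem virtualValue_eq_of_isLocalMax {p δ : ℝ} (hne : deriv Λ δ ≠ 0)
    (hmax : IsLocalMax (fun x => Λ x * (x - p)) δ) : virtualValue Λ δ = p := by
  have hderiv : HasDerivAt (fun x => Λ x * (x - p)) (deriv Λ δ * (δ - p) + Λ δ * 1) δ :=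
    (differentiableAt_of_deriv_ne_zero hne).hasDerivAt.mul ((hasDerivAt_id δ).sub_const p)
  have hcritical : deriv Λ δ * (δ - p) + Λ δ * 1 = 0 := hmax.hasDerivAt_eq_zero hderiv
  rw [virtualValue]
  field_simp
  linear_combination hcritical

theorem hasDerivAt_virtualValue {δ : ℝ} (hne : deriv Λ δ ≠ 0)
    (hΛ' : DifferentiableAt ℝ (deriv Λ) δ) :
    HasDerivAt (virtualValue Λ) (2 - Λ δ * iteratedDeriv 2 Λ δ / deriv Λ δ ^ 2) δ := by
  have hΛ'' : HasDerivAt (deriv Λ) (iteratedDeriv 2 Λ δ) δ := by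
    rw [iteratedDeriv_succ, iteratedDeriv_one]
    exact hΛ'.hasDerivAt
  have hΛ : HasDerivAt Λ (deriv Λ δ) δ := (differentiableAt_of_deriv_ne_zero hne).hasDerivAt
  refine ((hasDerivAt_id δ).add (hΛ.div hΛ'' hne)).congr_deriv ?_
  field_simp
  ring

theorem strictMono_virtualValue (hne : ∀ δ, deriv Λ δ ≠ 0) (hΛ' : Differentiable ℝ (deriv Λ))
    (hcurv : ∀ δ, Λ δ * iteratedDeriv 2 Λ δ / deriv Λ δ ^ 2 < 2) :
    StrictMono (virtualValue Λ) := by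
  refine strictMono_of_deriv_pos fun δ => ?_
  rw [(hasDerivAt_virtualValue (hne δ) (hΛ' δ)).deriv]
  exact sub_pos.2 (hcurv δ)

theorem surjective_maximizer_of_injective_virtualValue {s : ℝ → ℝ} (hne : ∀ δ, deriv Λ δ ≠ 0)
    (hinj : Function.Injective (virtualValue Λ))
    (hmax : ∀ p δ, Λ δ * (δ - p) ≤ Λ (s p) * (s p - p)) : Function.Surjective s := by
  have hinv : Function.LeftInverse (virtualValue Λ) s := fun p =>
    virtualValue_eq_of_isLocalMax (hne (s p)) (.of_forall (hmax p))
  exact (hinv.rightInverse_of_injective hinj).surjective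

end FirstOrderCondition

theorem constrained_maximizer_is_max_of_unconstrained_general
    {Λ : ℝ → ℝ} (hneg : ∀ δ, deriv Λ δ < 0) (hΛ' : Differentiable ℝ (deriv Λ))
    (hcurv : ∀ δ, Λ δ * iteratedDeriv 2 Λ δ / deriv Λ δ ^ 2 < 2) (a : ℝ) {δtil : ℝ → ℝ}
    (hmax : ∀ p δ, Λ δ * (δ - p) ≤ Λ (δtil p) * (δtil p - p)) :
    (∀ p, a ≤ max (δtil p) a ∧
      (∀ δ, a ≤ δ → Λ δ * (δ - p) ≤ Λ (max (δtil p) a) * (max (δtil p) a - p)) ∧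
      (∀ δs, a ≤ δs → (∀ δ, a ≤ δ → Λ δ * (δ - p) ≤ Λ δs * (δs - p)) → δs = max (δtil p) a)) ∧
    Continuous (fun p => max (δtil p) a) ∧ Monotone (fun p => max (δtil p) a) := by
  have hcross := strictSingleCrossing_mul_sub (strictAnti_of_deriv_neg hneg)
  have hne : ∀ δ, deriv Λ δ ≠ 0 := fun δ => (hneg δ).ne
  have hsurj : Function.Surjective δtil :=
    surjective_maximizer_of_injective_virtualValue hne
      (strictMono_virtualValue hne hΛ' hcurv).injective hmax
  have hmono : Monotone δtil := hcross.monotone_maximizer hmax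
  refine ⟨fun p => ⟨le_max_right _ _, fun δ hδ => ?_, fun δs hδs hδs_max => ?_⟩,
    (hmono.continuous_of_surjective hsurj).max continuous_const, hmono.max monotone_const⟩
  · obtain rfl | hδ_ne := eq_or_ne δ (max (δtil p) a)
    · exact le_rfl
    · exact (hcross.apply_lt_apply_max hmax hsurj p hδ hδ_ne).le
  · by_contra hδs_ne
    exact (hcross.apply_lt_apply_max hmax hsurj p hδs hδs_ne).not_ge
      (hδs_max _ (le_max_right _ _))

/-- The constrained supremum `H(p) = sup_{δ ≥ −δ∞} Λ(δ)(δ − p)` is attained at the unique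
point `δ*(p) = max(δ̃*(p), −δ∞)`, where `δ̃*(p)` is the unconstrained maximizer; moreover
`p ↦ δ*(p)` is continuous and nondecreasing. -/
theorem constrained_maximizer_is_max_of_unconstrained
    (Λ : ℝ → ℝ) (hΛ : HypH Λ) (δinf : ℝ) (hδinf : 0 ≤ δinf) (δtil : ℝ → ℝ)
    (hmax : ∀ p δ : ℝ, Λ δ * (δ - p) ≤ Λ (δtil p) * (δtil p - p))
    (huniq : ∀ p δs : ℝ, (∀ δ : ℝ, Λ δ * (δ - p) ≤ Λ δs * (δs - p)) → δs = δtil p) :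
    (∀ p : ℝ,
      -δinf ≤ max (δtil p) (-δinf) ∧
      (∀ δ : ℝ, -δinf ≤ δ →
        Λ δ * (δ - p) ≤ Λ (max (δtil p) (-δinf)) * (max (δtil p) (-δinf) - p)) ∧
      (∀ δs : ℝ, -δinf ≤ δs →
        (∀ δ : ℝ, -δinf ≤ δ → Λ δ * (δ - p) ≤ Λ δs * (δs - p)) →
        δs = max (δtil p) (-δinf))) ∧
    Continuous (fun p : ℝ => max (δtil p) (-δinf)) ∧
    Monotone (fun p : ℝ => max (δtil p) (-δinf)) := by
  obtain ⟨hC2, -, hneg, -, c, hc, hbound⟩ := hΛ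
  exact constrained_maximizer_is_max_of_unconstrained_general hneg hC2.differentiable_deriv_two
    (fun δ => (hbound δ).trans_lt hc) (-δinf) hmax
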